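/- Let G be a finite minimal nonsupersoluble group. Then the supersoluble residual G^𝔘 is the unique normal Sylow subgroup of G; that is, G^𝔘 is a Sylow p-subgroup of G for some prime p, it is normal in G, and every normal Sylow subgroup of G equals G^𝔘. -/

import Mathlib

open Subgroup

/-- A finite group is supersoluble if it has a normal series, all of whose terms are
normal in the whole group, with cyclic factors. -/
def IsSupersoluble (G : Type*) [Group G] : Prop :=
  ∃ (n : ℕ) (c : Fin (n + 1) → Subgroup G) (hc : ∀ i, (c i).Normal),
    c 0 = ⊥ ∧ c (Fin.last n) = ⊤ ∧
    ∀ i : Fin n, c i.castSucc ≤ c i.succ ∧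
      haveI := (hc i.castSucc).subgroupOf (c i.succ)
      IsCyclic (↥(c i.succ) ⧸ ((c i.castSucc).subgroupOf (c i.succ)))

/-- `H` is a maximal subgroup of `K`, where `H ≤ K` are subgroups of a common group. -/
def IsMaximalIn {G : Type*} [Group G] (H K : Subgroup G) : Prop :=
  H ≤ K ∧ IsCoatom (H.subgroupOf K)

/-- The `n`-maximal subgroups of `G`: `0`-maximal is `G` itself, and an `(n+1)`-maximal
subgroup is a maximal subgroup of some `n`-maximal subgroup. -/
def IsNMaximal {G : Type*} [Group G] : ℕ → Subgroup G → Prop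
  | 0, H => H = ⊤
  | n + 1, H => ∃ K : Subgroup G, IsNMaximal n K ∧ IsMaximalIn H K

/-- `H` is `K`-`𝔘`-subnormal in `K`: there is a chain of subgroups
`H = H₀ ≤ H₁ ≤ ⋯ ≤ Hₜ = K` such that at each step either `H_{i-1}` is normal in `H_i`
or `H_i` modulo the core of `H_{i-1}` in `H_i` is supersoluble. -/
def IsKUSubnormalIn {G : Type*} [Group G] (H K : Subgroup G) : Prop :=
  ∃ (n : ℕ) (c : Fin (n + 1) → Subgroup G),
    c 0 = H ∧ c (Fin.last n) = K ∧
    ∀ i : Fin n, c i.castSucc ≤ c i.succ ∧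
      (((c i.castSucc).subgroupOf (c i.succ)).Normal ∨
        IsSupersoluble (↥(c i.succ) ⧸ ((c i.castSucc).subgroupOf (c i.succ)).normalCore))

/-- `H` is `K`-`𝔘`-subnormal in `G`. -/
def IsKUSubnormal {G : Type*} [Group G] (H : Subgroup G) : Prop :=
  IsKUSubnormalIn H ⊤

/-- `H` is `𝔘`-subnormal in `G`: there is a chain of subgroups
`H = H₀ ≤ H₁ ≤ ⋯ ≤ Hₙ = G` with `H_i` modulo the core of `H_{i-1}` in `H_i`
supersoluble at each step. -/
def IsUSubnormal {G : Type*} [Group G] (H : Subgroup G) : Prop :=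
  ∃ (n : ℕ) (c : Fin (n + 1) → Subgroup G),
    c 0 = H ∧ c (Fin.last n) = ⊤ ∧
    ∀ i : Fin n, c i.castSucc ≤ c i.succ ∧
      IsSupersoluble (↥(c i.succ) ⧸ ((c i.castSucc).subgroupOf (c i.succ)).normalCore)

/-- The supersoluble residual `G^𝔘` of `G`: the intersection of all normal subgroups `N`
of `G` with `G/N` supersoluble. -/
def ssResidual (G : Type*) [Group G] : Subgroup G :=
  ⨅ N ∈ {N : Subgroup G | ∃ hN : N.Normal, haveI := hN; IsSupersoluble (G ⧸ N)}, N

/-- `N` is a minimal normal subgroup of `G`. -/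
def IsMinimalNormal {G : Type*} [Group G] (N : Subgroup G) : Prop :=
  N.Normal ∧ N ≠ ⊥ ∧ ∀ M : Subgroup G, M.Normal → M ≤ N → M ≠ ⊥ → M = N

/-- `G` is minimal nonsupersoluble: not supersoluble, but all proper subgroups are. -/
def IsMinimalNonsupersoluble (G : Type*) [Group G] : Prop :=
  ¬ IsSupersoluble G ∧ ∀ H : Subgroup G, H ≠ ⊤ → IsSupersoluble H

/-- `G` is an `SDH`-group: minimal nonsupersoluble with `G^𝔘` a minimal normal subgroup. -/
def IsSDH (G : Type*) [Group G] : Prop :=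
  IsMinimalNonsupersoluble G ∧ IsMinimalNormal (ssResidual G)

/-- `H` is a Sylow `p`-subgroup of its ambient (finite) group. -/
def IsSylowSubgroup {G : Type*} [Group G] (p : ℕ) (H : Subgroup G) : Prop :=
  IsPGroup p H ∧ ¬ p ∣ H.index

/-- A finite group is Ore dispersive if, enumerating the prime divisors of `|G|`
in decreasing order as `p₁ > p₂ > ⋯ > pₙ`, for every `i` it has a normal subgroup of
order `p₁^{a₁} ⋯ p_i^{a_i}`. -/
def OreDispersive (G : Type*) [Group G] : Prop :=
  ∀ p : ℕ, p.Prime → ∃ N : Subgroup G, N.Normal ∧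
    Nat.card N =
      ∏ q ∈ (Nat.card G).primeFactors.filter (fun q => p ≤ q),
        q ^ (Nat.card G).factorization q

/-- `A/B` is a chief factor of `G`. -/
def IsChiefFactor {G : Type*} [Group G] (A B : Subgroup G) : Prop :=
  A.Normal ∧ B ≤ A ∧ ∃ hB : B.Normal,
    haveI := hB
    IsMinimalNormal (A.map (QuotientGroup.mk' B))

/-- The subgroups `H` and `K` of `G` are conjugate in `G`. -/
def ConjSubgroup {G : Type*} [Group G] (H K : Subgroup G) : Prop :=
  ∃ g : G, K = H.map (MulAut.conj g).toMonoidHom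

/-- The Frattini subgroup of a subgroup `H` of `G`, as a subgroup of `G`. -/
def frattiniIn {G : Type*} [Group G] (H : Subgroup G) : Subgroup G :=
  (frattini H).map H.subtype

/-- `G = P ⋊ (Q ⋊ R)` as an internal statement about subgroups `P`, `Q`, `R` of `G`. -/
def IsInternalSemidirect3 {G : Type*} [Group G] (P Q R : Subgroup G) : Prop :=
  P.Normal ∧ P ⊓ (Q ⊔ R) = ⊥ ∧ P ⊔ Q ⊔ R = ⊤ ∧
    (Q.subgroupOf (Q ⊔ R)).Normal ∧ Q ⊓ R = ⊥

/-- `G = P ⋊ (Q ⋊ (R ⋊ T))` as an internal statement about subgroups of `G`. -/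
def IsInternalSemidirect4 {G : Type*} [Group G] (P Q R T : Subgroup G) : Prop :=
  P.Normal ∧ P ⊓ (Q ⊔ R ⊔ T) = ⊥ ∧ P ⊔ Q ⊔ R ⊔ T = ⊤ ∧
    (Q.subgroupOf (Q ⊔ R ⊔ T)).Normal ∧ Q ⊓ (R ⊔ T) = ⊥ ∧
    (R.subgroupOf (R ⊔ T)).Normal ∧ R ⊓ T = ⊥

/-!
Let `G` be minimal nonsupersoluble and `P` a nontrivial normal Sylow subgroup of `G`. A complement
`K` of `P` is proper, so `G / P ≅ K` is supersoluble. Suppose `G / N` is supersoluble with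
`P ≰ N`. Then `A = N ⊓ P` is proper in `P`, the quotient `G / A` is supersoluble, and `A K` is
a proper, hence supersoluble, subgroup. A nontrivial normal subgroup of `G` inside `A` meets the
centraliser of `P` nontrivially, and a cyclic normal subgroup of `A K` in this intersection is
normalised by `P` and by `K`, so it is normal in `G`; repeating this modulo the subgroup found
refines `1 ≤ A ≤ G` to a normal series of `G` with cyclic factors, a contradiction. So `G^𝔘 = P`
for every such `P`.

Such a `P` exists in every nontrivial group all of whose proper subgroups are supersoluble, by
induction on the order. Let `p` be the smallest prime divisor of `|G|`. A `p'`-element of a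
supersoluble subgroup centralises every `p`-subgroup that the subgroup normalises, because `p - 1`
is coprime to `|G|`. If `G` has a nontrivial normal `p`-subgroup `U`, a normal Sylow subgroup of
`G / U` yields one of `G`. Otherwise normalisers of nontrivial `p`-subgroups are proper, and
Frobenius' fusion argument with the focal subgroup theorem gives a proper normal subgroup of
`p`-power index, whose normal Sylow subgroup is characteristic.
-/

section

variable {G H : Type*} [Group G] [Group H]

/-! ### Normal series with cyclic factors -/

/-- `N ≤ M` are normal subgroups of `G` with `M / N` cyclic; the generator is encoded as an
element of `G` so that no quotient type is involved. -/
def IsCyclicStep (N M : Subgroup G) : Prop :=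
  N.Normal ∧ M.Normal ∧ ∃ g : G, N ⊔ zpowers g = M

/-- There is a chain of normal subgroups of `G` from `N` up to `M` with cyclic factors. -/
def HasCyclicSeries (N M : Subgroup G) : Prop :=
  Relation.ReflTransGen IsCyclicStep N M

theorem IsCyclicStep.le {N M : Subgroup G} (h : IsCyclicStep N M) : N ≤ M := by
  obtain ⟨-, -, g, rfl⟩ := h
  exact le_sup_left

theorem IsCyclicStep.map {N M : Subgroup G} (h : IsCyclicStep N M) {f : G →* H}
    (hf : Function.Surjective f) : IsCyclicStep (N.map f) (M.map f) := by
  obtain ⟨hN, hM, g, rfl⟩ := h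
  exact ⟨hN.map f hf, hM.map f hf, f g, by rw [Subgroup.map_sup, f.map_zpowers]⟩

theorem IsCyclicStep.comap {N M : Subgroup H} (h : IsCyclicStep N M) {f : G →* H}
    (hf : Function.Surjective f) : IsCyclicStep (N.comap f) (M.comap f) := by
  obtain ⟨hN, hM, g, rfl⟩ := h
  obtain ⟨g, rfl⟩ := hf g
  refine ⟨hN.comap f, hM.comap f, g, ?_⟩
  rw [← f.map_zpowers, ← comap_sup_eq _ _ _ hf, comap_map_eq, sup_comm (zpowers g), ← sup_assoc,
    sup_eq_left.2 (MonoidHom.ker_le_comap f N)]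

theorem mem_sup_zpowers_iff {N : Subgroup G} [N.Normal] {g x : G} :
    x ∈ N ⊔ zpowers g ↔ ∃ k : ℤ, (x : G ⧸ N) = (g : G ⧸ N) ^ k := by
  rw [← QuotientGroup.comap_map_mk', mem_comap, MonoidHom.map_zpowers, mem_zpowers_iff]
  simp only [QuotientGroup.mk'_apply, eq_comm]

theorem IsCyclicStep.inf {N M B : Subgroup G} (h : IsCyclicStep N M) (hB : B.Normal) :
    IsCyclicStep (N ⊓ B) (M ⊓ B) := by
  obtain ⟨hN, hM, g, rfl⟩ := h
  have hle : ((N ⊔ zpowers g) ⊓ B).map (QuotientGroup.mk' N) ≤ zpowers (g : G ⧸ N) := by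
    rintro _ ⟨x, ⟨hx, -⟩, rfl⟩
    obtain ⟨k, hk⟩ := mem_sup_zpowers_iff.1 hx
    exact ⟨k, hk.symm⟩
  obtain ⟨_, hgen⟩ :=
    (Subgroup.isCyclic_iff_exists_zpowers_eq_top _).1 (isCyclic_of_le hle)
  have hy' := hgen ▸ mem_zpowers _
  obtain ⟨y, hy, rfl⟩ := hy'
  refine ⟨inferInstance, inferInstance, y, le_antisymm ?_ fun x hx ↦ ?_⟩
  · exact sup_le (inf_le_inf_right B le_sup_left) (zpowers_le.2 hy)
  · obtain ⟨k, hk⟩ : (QuotientGroup.mk' N) x ∈ zpowers (QuotientGroup.mk' N y) :=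
      hgen ▸ mem_map_of_mem _ hx
    have hN' : (y ^ k)⁻¹ * x ∈ N := QuotientGroup.eq.1 hk
    have hB' : (y ^ k)⁻¹ * x ∈ B := B.mul_mem (B.inv_mem (B.zpow_mem hy.2 k)) hx.2
    rw [← mul_inv_cancel_left (y ^ k) x]
    exact mul_mem (mem_sup_right (zpow_mem (mem_zpowers y) k)) (mem_sup_left ⟨hN', hB'⟩)

theorem HasCyclicSeries.map {N M : Subgroup G} (h : HasCyclicSeries N M) {f : G →* H}
    (hf : Function.Surjective f) : HasCyclicSeries (N.map f) (M.map f) :=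
  h.lift (Subgroup.map f) fun _ _ hstep ↦ hstep.map hf

theorem HasCyclicSeries.comap {N M : Subgroup H} (h : HasCyclicSeries N M) {f : G →* H}
    (hf : Function.Surjective f) : HasCyclicSeries (N.comap f) (M.comap f) :=
  h.lift (Subgroup.comap f) fun _ _ hstep ↦ hstep.comap hf

theorem HasCyclicSeries.inf {N M B : Subgroup G} (h : HasCyclicSeries N M) (hB : B.Normal) :
    HasCyclicSeries (N ⊓ B) (M ⊓ B) :=
  h.lift (· ⊓ B) fun _ _ hstep ↦ hstep.inf hB

theorem isCyclic_quotient_subgroupOf_iff {N M : Subgroup G} [N.Normal] (hNM : N ≤ M) :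
    IsCyclic (M ⧸ N.subgroupOf M) ↔ ∃ g : G, N ⊔ zpowers g = M := by
  constructor
  · rintro ⟨c, hc⟩
    obtain ⟨g, rfl⟩ := QuotientGroup.mk_surjective c
    refine ⟨g, le_antisymm (sup_le hNM (zpowers_le.2 g.2)) fun x hx ↦ ?_⟩
    obtain ⟨k, hk⟩ := hc ((⟨x, hx⟩ : M) : M ⧸ N.subgroupOf M)
    refine mem_sup_zpowers_iff.2 ⟨k, ?_⟩
    exact (QuotientGroup.eq.2 (mem_subgroupOf.1 (QuotientGroup.eq.1 hk))).symm
  · rintro ⟨g, rfl⟩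
    let g' : ↥(N ⊔ zpowers g) := ⟨g, mem_sup_right (mem_zpowers g)⟩
    refine ⟨(g' : _ ⧸ N.subgroupOf (N ⊔ zpowers g)), fun c ↦ ?_⟩
    obtain ⟨⟨x, hx⟩, rfl⟩ := QuotientGroup.mk_surjective c
    obtain ⟨k, hk⟩ := mem_sup_zpowers_iff.1 hx
    exact ⟨k, QuotientGroup.eq.2 (mem_subgroupOf.2 (QuotientGroup.eq.1 hk.symm))⟩

theorem HasCyclicSeries.exists_fin_chain {N M : Subgroup G} (h : HasCyclicSeries N M)
    (hN : N.Normal) :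
    ∃ (n : ℕ) (c : Fin (n + 1) → Subgroup G), (∀ i, (c i).Normal) ∧ c 0 = N ∧
      c (Fin.last n) = M ∧ ∀ i : Fin n, IsCyclicStep (c i.castSucc) (c i.succ) := by
  induction h with
  | refl => exact ⟨0, fun _ ↦ N, fun _ ↦ hN, rfl, rfl, fun i ↦ i.elim0⟩
  | @tail K M _ hstep ih =>
    obtain ⟨n, c, hc, h0, hlast, hsteps⟩ := ih
    refine ⟨n + 1, Fin.snoc c M, ?_, by simpa using h0, by simp, ?_⟩
    · exact Fin.lastCases (by simpa using hstep.2.1) fun i ↦ by simpa using hc i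
    · refine Fin.lastCases ?_ fun i ↦ ?_
      · simpa [hlast] using hstep
      · simpa [← Fin.castSucc_succ] using hsteps i

theorem isSupersoluble_iff_hasCyclicSeries :
    IsSupersoluble G ↔ HasCyclicSeries (⊥ : Subgroup G) ⊤ := by
  constructor
  · rintro ⟨n, c, hc, h0, hlast, hstep⟩
    rw [← h0, ← hlast]
    induction Fin.last n using Fin.induction with
    | zero => exact .refl
    | succ i ih =>
      have := hc i.castSucc
      exact ih.tail ⟨hc _, hc _, (isCyclic_quotient_subgroupOf_iff (hstep i).1).1 (hstep i).2⟩
  · intro h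
    obtain ⟨n, c, hc, h0, hlast, hstep⟩ := h.exists_fin_chain inferInstance
    refine ⟨n, c, hc, h0, hlast, fun i ↦ ⟨(hstep i).le, ?_⟩⟩
    have := hc i.castSucc
    exact (isCyclic_quotient_subgroupOf_iff (hstep i).le).2 (hstep i).2.2

theorem isSupersoluble_quotient_iff {A : Subgroup G} [A.Normal] :
    IsSupersoluble (G ⧸ A) ↔ HasCyclicSeries A ⊤ := by
  rw [isSupersoluble_iff_hasCyclicSeries]
  constructor <;> intro h
  · simpa using h.comap (QuotientGroup.mk'_surjective A)
  · simpa [map_top_of_surjective _ (QuotientGroup.mk'_surjective A)] using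
      h.map (QuotientGroup.mk'_surjective A)

theorem IsSupersoluble.of_surjective (h : IsSupersoluble G) {f : G →* H}
    (hf : Function.Surjective f) : IsSupersoluble H := by
  rw [isSupersoluble_iff_hasCyclicSeries] at h ⊢
  simpa [map_top_of_surjective f hf] using h.map hf

theorem isSupersoluble_of_subsingleton [Subsingleton G] : IsSupersoluble G := by
  rw [isSupersoluble_iff_hasCyclicSeries, Subsingleton.elim (⊤ : Subgroup G) ⊥]
  exact .refl

theorem isSupersoluble_quotient_inf {M N : Subgroup G} [M.Normal] [N.Normal]
    (hM : IsSupersoluble (G ⧸ M)) (hN : IsSupersoluble (G ⧸ N)) :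
    IsSupersoluble (G ⧸ M ⊓ N) := by
  rw [isSupersoluble_quotient_iff] at hM hN ⊢
  have := hM.inf (B := N) inferInstance
  rw [top_inf_eq] at this
  exact this.trans hN

theorem HasCyclicSeries.exists_normal_zpowers {L : Subgroup G} (h : HasCyclicSeries ⊥ L)
    (hL : L ≠ ⊥) : ∃ g ∈ L, g ≠ 1 ∧ (zpowers g).Normal := by
  induction h with
  | refl => exact absurd rfl hL
  | @tail K L _ hstep ih =>
    obtain rfl | hK := eq_or_ne K ⊥
    · obtain ⟨-, hnormal, g, rfl⟩ := hstep
      rw [bot_sup_eq] at hL hnormal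
      exact ⟨g, mem_sup_right (mem_zpowers g), zpowers_ne_bot.1 hL, hnormal⟩
    · obtain ⟨g, hg, hg'⟩ := ih hK
      exact ⟨g, hstep.le hg, hg'⟩

theorem IsSupersoluble.hasCyclicSeries_bot (h : IsSupersoluble G) {L : Subgroup G}
    (hL : L.Normal) : HasCyclicSeries ⊥ L := by
  have := (isSupersoluble_iff_hasCyclicSeries.1 h).inf hL
  rwa [bot_inf_eq, top_inf_eq] at this

theorem hasCyclicSeries_of_forall_lt_exists_step [Finite G] {A : Subgroup G}
    (h : ∀ N < A, N.Normal → ∃ M ≤ A, N < M ∧ IsCyclicStep N M) {N : Subgroup G}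
    (hN : N.Normal) (hNA : N ≤ A) : HasCyclicSeries N A := by
  induction N using WellFoundedGT.induction with
  | ind N ih =>
    obtain rfl | hlt := hNA.eq_or_lt
    · exact .refl
    · obtain ⟨M, hMA, hNM, hstep⟩ := h N hlt hN
      exact (ih M hNM hstep.2.1 hMA).head hstep

/-! ### The residual and normal Sylow subgroups -/

theorem inf_centralizer_ne_bot [Finite G] {p : ℕ} [Fact p.Prime] {L P : Subgroup G}
    (hP : IsPGroup p P) (hL : L.Normal) (hL₁ : L ≠ ⊥) (hLP : L ≤ P) :
    L ⊓ centralizer P ≠ ⊥ := by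
  let := MulDistribMulAction.compHom L ((MulAut.conjNormal (H := L)).comp P.subtype)
  have hdvd : p ∣ Nat.card L :=
    (hP.to_le hLP).card_eq_or_dvd.resolve_left fun h ↦ hL₁ (L.eq_bot_of_card_eq h)
  obtain ⟨z, hz, hz₁⟩ := hP.exists_fixed_point_of_prime_dvd_card_of_fixed_point L hdvd
    (a := 1) fun x ↦ smul_one x
  have hcomm : (z : G) ∈ centralizer (P : Set G) := mem_centralizer_iff.2 fun x hx ↦ by
    have h : (MulAut.conjNormal x z : G) = z := congrArg Subtype.val (hz ⟨x, hx⟩)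
    rwa [MulAut.conjNormal_apply, mul_inv_eq_iff_eq_mul] at h
  exact fun h ↦ hz₁ (Subtype.ext ((eq_bot_iff_forall _).1 h z ⟨z.2, hcomm⟩).symm)

/- A cyclic normal subgroup of `K` inside `L ⊓ centralizer P` is normalised by `P` and by `K`. -/
theorem exists_normal_zpowers_of_sup_eq_top [Finite G] {p : ℕ} [Fact p.Prime]
    {P L K : Subgroup G} (hPn : P.Normal) (hP : IsPGroup p P) (hK : IsSupersoluble K)
    (hPK : P ⊔ K = ⊤) (hL : L.Normal) (hL₁ : L ≠ ⊥) (hLP : L ≤ P) (hLK : L ≤ K) :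
    ∃ g ∈ L, g ≠ 1 ∧ (zpowers g).Normal := by
  set Z := L ⊓ centralizer P
  have hZK : Z.subgroupOf K ≠ ⊥ := by
    rw [Ne, subgroupOf_eq_bot, disjoint_iff, inf_eq_left.2 (inf_le_left.trans hLK)]
    exact inf_centralizer_ne_bot hP hL hL₁ hLP
  obtain ⟨⟨g, hgK⟩, hgZ, hg₁, hgn⟩ :=
    (hK.hasCyclicSeries_bot (L := Z.subgroupOf K) inferInstance).exists_normal_zpowers hZK
  rw [mem_subgroupOf] at hgZ
  refine ⟨g, hgZ.1, fun h ↦ hg₁ (Subtype.ext h), ?_⟩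
  rw [← normalizer_eq_top_iff, eq_top_iff, ← hPK]
  refine sup_le ?_ ?_
  · exact (le_centralizer_iff.1 (zpowers_le.2 hgZ.2)).trans (centralizer_le_normalizer _)
  · rw [← normal_subgroupOf_iff_le_normalizer (zpowers_le.2 hgK)]
    have h := MonoidHom.map_zpowers K.subtype ⟨g, hgK⟩
    rwa [← comap_map_eq_self_of_injective K.subtype_injective (zpowers _), h] at hgn

theorem isSupersoluble_of_quotient_of_sup_eq_top [Finite G] {p : ℕ} [Fact p.Prime]
    {P A K : Subgroup G} (hPn : P.Normal) (hP : IsPGroup p P) (hK : IsSupersoluble K)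
    (hPK : P ⊔ K = ⊤) [A.Normal] (hAP : A ≤ P) (hAK : A ≤ K)
    (hA : IsSupersoluble (G ⧸ A)) : IsSupersoluble G := by
  rw [isSupersoluble_iff_hasCyclicSeries]
  rw [isSupersoluble_quotient_iff] at hA
  suffices HasCyclicSeries ⊥ A from this.trans hA
  refine hasCyclicSeries_of_forall_lt_exists_step (fun N hNA hN ↦ ?_) inferInstance bot_le
  let π := QuotientGroup.mk' N
  have hπ : Function.Surjective π := QuotientGroup.mk'_surjective N
  have hAN : A.map π ≠ ⊥ := by
    rw [Ne, Subgroup.map_eq_bot_iff, QuotientGroup.ker_mk']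
    exact hNA.not_ge
  obtain ⟨_, ⟨a, ha, rfl⟩, ha₁, han⟩ :=
    exists_normal_zpowers_of_sup_eq_top (hPn.map π hπ) (hP.map π)
      (hK.of_surjective (π.subgroupMap_surjective K))
      (by rw [← Subgroup.map_sup, hPK, map_top_of_surjective π hπ])
      (Normal.map inferInstance π hπ) hAN (map_mono hAP) (map_mono hAK)
  have hM : (N ⊔ zpowers a).Normal := by
    rw [← QuotientGroup.comap_map_mk', MonoidHom.map_zpowers]
    exact han.comap π
  refine ⟨N ⊔ zpowers a, sup_le hNA.le (zpowers_le.2 ha), ?_, hN, hM, a, rfl⟩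
  rw [left_lt_sup, zpowers_le]
  rwa [Ne, QuotientGroup.mk'_apply, QuotientGroup.eq_one_iff] at ha₁

theorem isSupersoluble_quotient_of_coprime_index
    (h : ∀ K : Subgroup G, K ≠ ⊤ → IsSupersoluble K) {N : Subgroup G} [N.Normal]
    (hN : (Nat.card N).Coprime N.index) (hN₁ : N ≠ ⊥) : IsSupersoluble (G ⧸ N) := by
  obtain ⟨K, hK⟩ := exists_left_complement'_of_coprime hN
  have hK₁ : K ≠ ⊤ := by
    rintro rfl
    exact hN₁ (isComplement'_top_left.1 hK)
  exact (h K hK₁).of_surjective (f := hK.QuotientMulEquiv.symm.toMonoidHom)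
    hK.QuotientMulEquiv.symm.surjective

theorem isSupersoluble_of_quotient_of_lt_sylow [Finite G]
    (h : ∀ K : Subgroup G, K ≠ ⊤ → IsSupersoluble K) {p : ℕ} [Fact p.Prime] (P : Sylow p G)
    [hPn : (P : Subgroup G).Normal] {A : Subgroup G} [A.Normal] (hA : A < P)
    (hGA : IsSupersoluble (G ⧸ A)) : IsSupersoluble G := by
  obtain ⟨K, hK⟩ := exists_right_complement'_of_coprime P.card_coprime_index
  have hAK : A ⊔ K ≠ ⊤ := by
    refine fun htop ↦ hA.not_ge fun x hx ↦ ?_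
    obtain ⟨a, ha, k, hk, rfl⟩ := mem_sup_of_normal_left.1 (htop ▸ mem_top x)
    have hkP : k ∈ (P : Subgroup G) := (mul_mem_cancel_left (hA.le ha)).1 hx
    have : k = 1 := disjoint_def.1 hK.disjoint hkP hk
    rwa [this, mul_one]
  refine isSupersoluble_of_quotient_of_sup_eq_top hPn P.isPGroup' (h _ hAK) ?_ hA.le le_sup_left
    hGA
  rw [← sup_assoc, sup_eq_left.2 hA.le, hK.sup_eq_top]

theorem ssResidual_eq_of_normal_sylow [Finite G] (h : IsMinimalNonsupersoluble G) {p : ℕ}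
    [Fact p.Prime] (P : Sylow p G) [(P : Subgroup G).Normal] (hP : (P : Subgroup G) ≠ ⊥) :
    ssResidual G = P := by
  have hGP := isSupersoluble_quotient_of_coprime_index h.2 P.card_coprime_index hP
  refine le_antisymm (iInf₂_le (P : Subgroup G) ⟨inferInstance, hGP⟩) (le_iInf₂ ?_)
  rintro N ⟨hN, hGN⟩
  by_contra hPN
  have hlt : N ⊓ P < P := inf_lt_right.2 hPN
  exact h.1 (isSupersoluble_of_quotient_of_lt_sylow h.2 P hlt (isSupersoluble_quotient_inf hGN hGP))

/-! ### Coprime elements of supersoluble groups -/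

theorem commute_of_normal_zpowers [Finite G] {x w : G} (hw : (zpowers w).Normal)
    (hx : (orderOf x).Coprime (orderOf w).totient) : Commute x w := by
  have hdvd : orderOf (MulAut.conjNormal (H := zpowers w) x) ∣ (orderOf w).totient := by
    rw [← Nat.card_zpowers w, ← IsCyclic.card_mulAut]
    exact orderOf_dvd_natCard _
  have h := orderOf_eq_one_iff.1
    (Nat.eq_one_of_dvd_coprimes hx (orderOf_map_dvd MulAut.conjNormal x) hdvd)
  have hconj := MulAut.conjNormal_apply x (⟨w, mem_zpowers w⟩ : zpowers w)
  rw [h, MulAut.one_apply] at hconj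
  exact mul_inv_eq_iff_eq_mul.1 hconj.symm

theorem commute_of_commute_conj_mul_inv {x y : G} (h : Commute (y⁻¹ * x * y * x⁻¹) x)
    (hcop : (orderOf x).Coprime (orderOf (y⁻¹ * x * y * x⁻¹))) : Commute x y := by
  -- `z` has order dividing that of `x`, because `z * x` is a conjugate of `x`.
  set z := y⁻¹ * x * y * x⁻¹ with hz
  have hpow : (z * x) ^ orderOf x = 1 := by
    have : z * x = y⁻¹ * x * y⁻¹⁻¹ := by rw [hz, inv_mul_cancel_right, inv_inv]
    rw [this, conj_pow, pow_orderOf_eq_one, mul_one, mul_inv_cancel]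
  rw [h.mul_pow, pow_orderOf_eq_one, mul_one] at hpow
  have hz₁ : z = 1 := orderOf_eq_one_iff.1
    (Nat.eq_one_of_dvd_coprimes hcop (orderOf_dvd_of_pow_eq_one hpow) dvd_rfl)
  rwa [hz, mul_inv_eq_one, mul_assoc, inv_mul_eq_iff_eq_mul] at hz₁

theorem commute_mk_of_sup_zpowers_normal [Finite G] {p : ℕ} [hp : Fact p.Prime] {N M : Subgroup G}
    [N.Normal] (hM : IsPGroup p M) {x g : G} (hMn : M.Normal) (hg : N ⊔ zpowers g = M)
    (hxp : (orderOf x).Coprime p) (hxp' : (orderOf x).Coprime (p - 1)) :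
    Commute (x : G ⧸ N) g := by
  let π := QuotientGroup.mk' N
  have hzp : M.map π = zpowers (g : G ⧸ N) := by
    rw [← hg, Subgroup.map_sup, MonoidHom.map_zpowers, QuotientGroup.map_mk'_self, bot_sup_eq]
    rfl
  obtain ⟨k, hk⟩ := (hM.map π).exists_orderOf_eq_pow ⟨g, hzp ▸ mem_zpowers _⟩
  rw [orderOf_mk] at hk
  refine commute_of_normal_zpowers
    (hzp ▸ hMn.map π (QuotientGroup.mk'_surjective N)) ?_
  refine .coprime_dvd_left (orderOf_map_dvd π x) ?_
  obtain rfl | hk₀ := k.eq_zero_or_pos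
  · simp [hk]
  · rw [hk, Nat.totient_prime_pow hp.1 hk₀]
    exact (hxp.pow_right _).mul_right hxp'

theorem mem_centralizer_of_hasCyclicSeries [Finite G] {p : ℕ} [Fact p.Prime] {M : Subgroup G}
    (h : HasCyclicSeries ⊥ M) (hM : IsPGroup p M) {x : G} (hxp : (orderOf x).Coprime p)
    (hxp' : (orderOf x).Coprime (p - 1)) : x ∈ centralizer (M : Set G) := by
  suffices M ≤ centralizer {x} from mem_centralizer_iff.2 fun y hy ↦
    (mem_centralizer_iff.1 (this hy) x rfl).symm
  induction h with
  | refl => exact bot_le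
  | @tail N M _ hstep ih =>
    have hN := hM.to_le hstep.le
    replace ih := ih hN
    obtain ⟨hNn, hMn, g, hg⟩ := hstep
    have hcomm := (commute_mk_of_sup_zpowers_normal hM hMn hg hxp hxp').eq
    have hz : g⁻¹ * x * g * x⁻¹ ∈ N := by
      rw [← QuotientGroup.eq_one_iff]
      simp only [QuotientGroup.mk_mul, QuotientGroup.mk_inv]
      rw [mul_assoc _ (x : G ⧸ N), hcomm, inv_mul_cancel_left, mul_inv_cancel]
    obtain ⟨k, hk⟩ := hN.exists_orderOf_eq_pow ⟨_, hz⟩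
    rw [orderOf_mk] at hk
    have hxg : Commute x g := commute_of_commute_conj_mul_inv
      (mem_centralizer_singleton_iff.1 (ih hz)) (hk ▸ hxp.pow_right k)
    rw [← hg]
    exact sup_le ih (zpowers_le.2 (mem_centralizer_singleton_iff.2 hxg.symm.eq))

theorem mem_centralizer_of_isSupersoluble [Finite G] {p : ℕ} [Fact p.Prime] {D K : Subgroup G}
    (hD : IsPGroup p D) (hDK : D ≤ K) (hKD : K ≤ normalizer (D : Set G)) (hK : IsSupersoluble K)
    {x : G} (hxK : x ∈ K) (hxp : (orderOf x).Coprime p) (hxp' : (orderOf x).Coprime (p - 1)) :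
    x ∈ centralizer (D : Set G) := by
  have hDn : (D.subgroupOf K).Normal := (normal_subgroupOf_iff_le_normalizer hDK).2 hKD
  rw [← orderOf_mk x hxK] at hxp hxp'
  have hx := mem_centralizer_of_hasCyclicSeries (hK.hasCyclicSeries_bot hDn) hD.comap_subtype
    hxp hxp'
  exact mem_centralizer_iff.2 fun y hy ↦
    congrArg Subtype.val (mem_centralizer_iff.1 hx ⟨y, hDK hy⟩ hy)

/-! ### Frobenius' normal complement argument -/

theorem sup_sylow_eq_top [Finite G] {p : ℕ} [hp : Fact p.Prime] {C : Subgroup G} [C.Normal]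
    (hC : ∀ x : G, (orderOf x).Coprime p → x ∈ C) (S : Sylow p G) : C ⊔ S = ⊤ := by
  have hGC : IsPGroup p (G ⧸ C) := by
    intro y
    obtain ⟨x, rfl⟩ := QuotientGroup.mk_surjective y
    obtain ⟨k, m, hm, hx⟩ := Nat.exists_eq_pow_mul_and_not_dvd (orderOf_pos x).ne' p hp.1.ne_one
    refine ⟨k, (QuotientGroup.eq_one_iff _).2 (hC _ ?_)⟩
    rw [orderOf_pow_of_dvd (pow_pos hp.1.pos k).ne' (hx ▸ dvd_mul_right _ _), hx,
      Nat.mul_div_cancel_left _ (pow_pos hp.1.pos k)]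
    exact ((Nat.Prime.coprime_iff_not_dvd hp.1).2 hm).symm
  obtain ⟨n, hn⟩ := IsPGroup.iff_card.1 hGC
  rw [← index_eq_one]
  refine Nat.eq_one_of_dvd_coprimes (hp.1.coprime_pow_of_not_dvd S.not_dvd_index (m := n)) ?_ ?_
  · exact index_dvd_of_le le_sup_right
  · exact hn ▸ index_dvd_of_le le_sup_left

theorem exists_mem_smul_sylow_eq [Finite G] {p : ℕ} [Fact p.Prime] {C : Subgroup G} [C.Normal]
    (hC : ∀ x : G, (orderOf x).Coprime p → x ∈ C) (S T : Sylow p G) : ∃ c ∈ C, c • S = T := by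
  obtain ⟨g, rfl⟩ := MulAction.exists_smul_eq G S T
  obtain ⟨c, hc, s, hs, rfl⟩ := mem_sup_of_normal_left.1 (sup_sylow_eq_top hC S ▸ mem_top g)
  exact ⟨c, hc, by rw [mul_smul, Sylow.smul_eq_iff_mem_normalizer.2 (le_normalizer hs)]⟩

theorem mem_smul_sylow_iff {p : ℕ} {P : Sylow p G} {g x : G} :
    x ∈ ((g • P : Sylow p G) : Subgroup G) ↔ g⁻¹ * x * g ∈ (P : Subgroup G) := by
  rw [Sylow.coe_subgroup_smul, mem_pointwise_smul_iff_inv_smul_mem, ← map_inv, MulAut.smul_def,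
    MulAut.conj_apply, inv_inv]

theorem lt_inf_normalizer [Finite G] {p : ℕ} [Fact p.Prime] {D P : Subgroup G}
    (hP : IsPGroup p P) (hDP : D < P) : D < P ⊓ normalizer (D : Set G) := by
  have := hP.isNilpotent
  have hlt : D.subgroupOf P < ⊤ := by
    rw [lt_top_iff_ne_top, Ne, subgroupOf_eq_top]
    exact hDP.not_ge
  have h := Group.normalizerCondition_of_isNilpotent _ hlt
  rw [← subgroupOf_normalizer_eq hDP.le, ← map_lt_map_iff_of_injective P.subtype_injective,
    subgroupOf_map_subtype, subgroupOf_map_subtype, inf_eq_left.2 hDP.le, inf_comm] at h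
  exact h

/-- Frobenius' hypothesis at `p`: every `p'`-element normalising a nontrivial `p`-subgroup
centralises it. -/
def FrobeniusCondition (p : ℕ) (G : Type*) [Group G] : Prop :=
  ∀ D : Subgroup G, IsPGroup p D → D ≠ ⊥ → ∀ x ∈ normalizer (D : Set G),
    (orderOf x).Coprime p → x ∈ centralizer (D : Set G)

section Frobenius

variable {p : ℕ}

theorem FrobeniusCondition.mem_centralizer_subgroupOf (h : FrobeniusCondition p G)
    {D : Subgroup G} (hD : IsPGroup p D) (hD₁ : D ≠ ⊥) (x : normalizer (D : Set G))
    (hx : (orderOf x).Coprime p) :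
    x ∈ (centralizer (D : Set G)).subgroupOf (normalizer (D : Set G)) :=
  h D hD hD₁ x x.2 (by rwa [orderOf_coe])

variable [Finite G] [Fact p.Prime]

theorem FrobeniusCondition.exists_sylow_le_le (h : FrobeniusCondition p G)
    {A B D : Subgroup G} (hD : IsPGroup p D) (hD₁ : D ≠ ⊥) (hA : IsPGroup p A)
    (hB : IsPGroup p B) (hAD : A ≤ normalizer (D : Set G)) (hBD : B ≤ normalizer (D : Set G)) :
    ∃ R : Sylow p G, A ≤ R ∧ ∃ c ∈ centralizer (D : Set G), B ≤ (c • R : Sylow p G) := by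
  obtain ⟨S, hS⟩ := (hA.comap_subtype (K := normalizer (D : Set G))).exists_le_sylow
  obtain ⟨T, hT⟩ := (hB.comap_subtype (K := normalizer (D : Set G))).exists_le_sylow
  obtain ⟨c, hc, rfl⟩ := exists_mem_smul_sylow_eq (h.mem_centralizer_subgroupOf hD hD₁) S T
  obtain ⟨R, hR⟩ := (S.isPGroup'.map (normalizer (D : Set G)).subtype).exists_le_sylow
  refine ⟨R, fun a ha ↦ hR ⟨⟨a, hAD ha⟩, hS ha, rfl⟩, c, hc, fun b hb ↦ ?_⟩
  exact mem_smul_sylow_iff.2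
    (hR ⟨_, mem_smul_sylow_iff.1 (hT (x := ⟨b, hBD hb⟩) hb), rfl⟩)

/- Downward induction on `D`: both intersections `P ⊓ N(D)` and `Q ⊓ N(D)` are larger than `D`, and
Sylow `p`-subgroups of `N(D)` are conjugate under `C(D)`. -/
theorem FrobeniusCondition.exists_mem_centralizer_smul_eq (h : FrobeniusCondition p G)
    {D : Subgroup G} {P Q : Sylow p G} (hDP : D ≤ P) (hDQ : D ≤ Q) :
    ∃ c ∈ centralizer (D : Set G), c • P = Q := by
  induction D using WellFoundedGT.induction generalizing P Q with
  | ind D ih =>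
    have hD : IsPGroup p D := P.isPGroup'.to_le hDP
    obtain rfl | hD₁ := eq_or_ne D ⊥
    · obtain ⟨g, hg⟩ := MulAction.exists_smul_eq G P Q
      exact ⟨g, by simp [mem_centralizer_iff], hg⟩
    obtain rfl | hPQ := eq_or_ne P Q
    · exact ⟨1, one_mem _, one_smul G P⟩
    have hDP' : D < P := hDP.lt_of_ne fun hD ↦
      hPQ (Sylow.ext (P.is_maximal' Q.isPGroup' (hD ▸ hDQ)).symm)
    have hDQ' : D < Q := hDQ.lt_of_ne fun hD ↦
      hPQ (Sylow.ext (Q.is_maximal' P.isPGroup' (hD ▸ hDP)))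
    obtain ⟨R, hPR, c, hc, hQR⟩ := h.exists_sylow_le_le hD hD₁
      (P.isPGroup'.to_le inf_le_left) (Q.isPGroup'.to_le inf_le_left) inf_le_right inf_le_right
    have hPD := lt_inf_normalizer P.isPGroup' hDP'
    have hQD := lt_inf_normalizer Q.isPGroup' hDQ'
    obtain ⟨a, ha, rfl⟩ := ih _ hPD inf_le_left hPR
    obtain ⟨b, hb, rfl⟩ := ih _ hQD hQR inf_le_left
    refine ⟨b * (c * a), ?_, by rw [mul_smul, mul_smul]⟩
    exact mul_mem (centralizer_le hQD.le hb) (mul_mem hc (centralizer_le hPD.le ha))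

theorem FrobeniusCondition.exists_mul_of_mem_normalizer (h : FrobeniusCondition p G)
    {P : Sylow p G} (hP : (P : Subgroup G) ≠ ⊥) {g : G} (hg : g ∈ normalizer (P : Set G)) :
    ∃ d ∈ centralizer (P : Set G), ∃ s ∈ (P : Subgroup G), d * s = g := by
  have hsup := sup_sylow_eq_top (h.mem_centralizer_subgroupOf P.isPGroup' hP)
    (P.subtype le_normalizer)
  obtain ⟨d, hd, s, hs, hds⟩ :=
    mem_sup_of_normal_left.1 (hsup.ge (mem_top (⟨g, hg⟩ : normalizer (P : Set G))))
  exact ⟨d, hd, s, hs, congrArg Subtype.val hds⟩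

theorem FrobeniusCondition.exists_mem_conj_eq_conj (h : FrobeniusCondition p G)
    {P : Sylow p G} {x u : G} (hx : x ∈ (P : Subgroup G))
    (hux : u * x * u⁻¹ ∈ (P : Subgroup G)) :
    ∃ s ∈ (P : Subgroup G), u * x * u⁻¹ = s * x * s⁻¹ := by
  obtain hP | hP := eq_or_ne (P : Subgroup G) ⊥
  · obtain rfl : x = 1 := by rwa [hP, mem_bot] at hx
    exact ⟨1, one_mem _, by simp⟩
  have huP : u * x * u⁻¹ ∈ ((u • P : Sylow p G) : Subgroup G) := mem_smul_sylow_iff.2 (by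
    simpa [mul_assoc] using hx)
  obtain ⟨c, hc, hcu⟩ :=
    h.exists_mem_centralizer_smul_eq (zpowers_le.2 huP) (zpowers_le.2 hux)
  rw [← mul_smul, Sylow.smul_eq_iff_mem_normalizer] at hcu
  obtain ⟨d, hd, s, hs, hds⟩ := h.exists_mul_of_mem_normalizer hP hcu
  have hcx : Commute (u * x * u⁻¹) c := mem_centralizer_iff.1 hc _ (mem_zpowers _)
  have hdx : Commute (s * x * s⁻¹) d :=
    mem_centralizer_iff.1 hd _ (mul_mem (mul_mem hs hx) (inv_mem hs))
  refine ⟨s, hs, ?_⟩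
  calc u * x * u⁻¹ = c * (u * x * u⁻¹) * c⁻¹ := by rw [← hcx.eq, mul_inv_cancel_right]
    _ = (c * u) * x * (c * u)⁻¹ := by simp only [mul_assoc, mul_inv_rev]
    _ = d * (s * x * s⁻¹) * d⁻¹ := by rw [← hds]; simp only [mul_assoc, mul_inv_rev]
    _ = s * x * s⁻¹ := by rw [← hdx.eq, mul_inv_cancel_right]

open scoped commutatorElement in
theorem FrobeniusCondition.focalSubgroup_le (h : FrobeniusCondition p G) (P : Sylow p G) :
    (P : Subgroup G).focalSubgroup ≤ ⁅(P : Subgroup G), (P : Subgroup G)⁆ := by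
  rw [focalSubgroup_def, closure_le]
  rintro _ ⟨hgP, x, hx, u, rfl⟩
  have hux : u * x⁻¹ * u⁻¹ ∈ (P : Subgroup G) := by
    have := mul_mem (inv_mem hx) hgP
    rwa [commutatorElement_def, mul_assoc, mul_assoc, inv_mul_cancel_left, ← mul_assoc] at this
  obtain ⟨s, hs, hsx⟩ := h.exists_mem_conj_eq_conj (inv_mem hx) hux
  have hxu : ⁅x, u⁆ = ⁅x, s⁆ := by
    simp only [commutatorElement_def, mul_assoc] at hsx ⊢
    rw [hsx]
  exact hxu ▸ commutator_mem_commutator hx hs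

theorem FrobeniusCondition.exists_normal_index_eq_pow (h : FrobeniusCondition p G)
    (hpG : p ∣ Nat.card G) :
    ∃ N : Subgroup G, N.Normal ∧ N ≠ ⊤ ∧ ∃ k, N.index = p ^ k := by
  let P : Sylow p G := default
  have hP : Nontrivial P := (nontrivial_iff_ne_bot _).2 (P.ne_bot_of_dvd_card hpG)
  have hnil : Group.IsNilpotent P := P.isPGroup'.isNilpotent
  have hidx : (P : Subgroup G).transferFocal.ker.index = (P : Subgroup G).focalSubgroupOf.index :=
    Nat.card_congr (transferFocal.quotientKerMulEquivQuotientFocalSubroupOf P).toEquiv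
  have hfoc : (P : Subgroup G).focalSubgroupOf ≤ commutator P := by
    rw [← map_le_map_iff_of_injective (P : Subgroup G).subtype_injective, map_subtype_commutator]
    exact map_le_iff_le_comap.2 (comap_mono (h.focalSubgroup_le P))
  refine ⟨(P : Subgroup G).transferFocal.ker, inferInstance, fun hT ↦ ?_, ?_⟩
  · rw [hT, index_top, eq_comm, index_eq_one] at hidx
    exact (Group.IsSolvable.commutator_lt_top_of_nontrivial P).not_ge (hidx ▸ hfoc)
  · exact hidx ▸ P.isPGroup'.index _

end Frobenius

/-! ### Existence of a normal Sylow subgroup -/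

theorem coprime_minFac_sub_one (n : ℕ) : n.Coprime (n.minFac - 1) := by
  obtain rfl | hn := eq_or_ne n 1
  · exact Nat.coprime_one_left _
  have h := (Nat.minFac_prime hn).two_le
  exact Nat.coprime_of_lt_minFac (by omega) (by omega)

theorem frobeniusCondition_minFac_card [Finite G] [Nontrivial G]
    (h : ∀ H : Subgroup G, H ≠ ⊤ → IsSupersoluble H)
    (hO : ∀ U : Subgroup G, U.Normal → IsPGroup (Nat.card G).minFac U → U = ⊥) :
    FrobeniusCondition (Nat.card G).minFac G := by
  have := Fact.mk (Nat.minFac_prime (Finite.one_lt_card (α := G)).ne')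
  intro D hD hD₁ x hx hxp
  have hss := h _ fun hDn ↦ hD₁ (hO D (normalizer_eq_top_iff.1 hDn) hD)
  exact mem_centralizer_of_isSupersoluble hD le_normalizer le_rfl hss hx hxp
    ((coprime_minFac_sub_one _).coprime_dvd_left (orderOf_dvd_natCard x))

theorem normal_sylow_of_le_normalizer [Finite G] {r : ℕ} [Fact r.Prime] {U : Subgroup G}
    {Q : Sylow r G} (hUQ : U ≤ normalizer (Q : Set G)) (hn : (U ⊔ Q).Normal) :
    (Q : Subgroup G).Normal := by
  rw [← normalizer_eq_top_iff, eq_top_iff, ← Q.normalizer_sup_eq_top' (le_sup_right (a := U))]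
  exact sup_le le_rfl (sup_le hUQ le_normalizer)

theorem normal_sylow_of_isSupersoluble_sup [Finite G] {p r : ℕ} [hp : Fact p.Prime]
    [hr : Fact r.Prime] (hrp : r ≠ p) (hpG : (Nat.card G).Coprime (p - 1)) {U : Subgroup G}
    [hUn : U.Normal] (hU : IsPGroup p U) {Q : Sylow r G} (hn : (U ⊔ Q).Normal)
    (hss : IsSupersoluble (U ⊔ Q : Subgroup G)) : (Q : Subgroup G).Normal := by
  have hQU : (Q : Subgroup G) ≤ centralizer (U : Set G) := by
    intro x hx
    obtain ⟨k, hk⟩ := Q.isPGroup'.exists_orderOf_eq_pow ⟨x, hx⟩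
    rw [orderOf_mk] at hk
    refine mem_centralizer_of_isSupersoluble hU le_sup_left ?_ hss (le_sup_right (a := U) hx) ?_
      (hpG.coprime_dvd_left (orderOf_dvd_natCard x))
    · rw [normalizer_eq_top_iff.2 hUn]
      exact le_top
    · exact hk ▸ ((Nat.coprime_primes hr.1 hp.1).2 hrp).pow_left k
  exact normal_sylow_of_le_normalizer
    ((le_centralizer_iff.1 hQU).trans (centralizer_le_normalizer _)) hn

theorem isSylowSubgroup_of_sup_eq_top [Finite G] {p r : ℕ} [hp : Fact p.Prime]
    [hr : Fact r.Prime] (hrp : r ≠ p) {U Q : Subgroup G} [U.Normal] (hU : IsPGroup p U)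
    (hQ : IsPGroup r Q) (hUQ : U ⊔ Q = ⊤) : IsSylowSubgroup p U := by
  refine ⟨hU, fun hdvd ↦ hrp ?_⟩
  obtain ⟨k, hk⟩ := IsPGroup.iff_card.1 hQ
  rw [← relIndex_top_right, ← hUQ, sup_comm, relIndex_sup_right] at hdvd
  have hpr : p ∣ r ^ k := hk ▸ hdvd.trans (relIndex_dvd_card U Q)
  exact ((Nat.prime_dvd_prime_iff_eq hp.1 hr.1).1 (hp.1.dvd_of_dvd_pow hpr)).symm

/-- `G` has a nontrivial normal Sylow subgroup, for some prime. -/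
def HasNormalSylow (G : Type*) [Group G] : Prop :=
  ∃ (r : ℕ) (_ : Fact r.Prime) (R : Sylow r G), (R : Subgroup G).Normal ∧ (R : Subgroup G) ≠ ⊥

theorem hasNormalSylow_of_isSylowSubgroup {r : ℕ} [hr : Fact r.Prime] {R : Subgroup G}
    (hRn : R.Normal) (hR : IsSylowSubgroup r R) (hR₁ : R ≠ ⊥) : HasNormalSylow G :=
  ⟨r, hr, hR.1.toSylow hR.2, hRn, hR₁⟩

theorem hasNormalSylow_of_isPGroup [Nontrivial G] {p : ℕ} [hp : Fact p.Prime]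
    (h : IsPGroup p G) : HasNormalSylow G :=
  hasNormalSylow_of_isSylowSubgroup normal_top
    ⟨h.to_subgroup ⊤, by rw [index_top]; exact hp.1.not_dvd_one⟩ top_ne_bot

theorem HasNormalSylow.of_quotient [Finite G] (h : ∀ H : Subgroup G, H ≠ ⊤ → IsSupersoluble H)
    {p : ℕ} [hp : Fact p.Prime] (hpG : (Nat.card G).Coprime (p - 1)) {U : Subgroup G} [U.Normal]
    (hU : IsPGroup p U) (hU₁ : U ≠ ⊥) (hGU : HasNormalSylow (G ⧸ U)) : HasNormalSylow G := by
  obtain ⟨r, hr, R, hRn, hR₁⟩ := hGU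
  let π := QuotientGroup.mk' U
  have hπ : Function.Surjective π := QuotientGroup.mk'_surjective U
  have hker : π.ker = U := QuotientGroup.ker_mk' U
  obtain rfl | hrp := eq_or_ne r p
  · refine hasNormalSylow_of_isSylowSubgroup (hRn.comap π)
      ⟨R.isPGroup'.comap_of_ker_isPGroup π (hker.symm ▸ hU), ?_⟩
      (ne_bot_of_le_ne_bot hU₁ (hker.ge.trans (π.ker_le_comap R)))
    rw [index_comap_of_surjective _ hπ]
    exact R.not_dvd_index
  obtain ⟨Q, rfl⟩ := Sylow.mapSurjective_surjective hπ r R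
  rw [Sylow.coe_mapSurjective] at hRn hR₁
  have hn : (U ⊔ Q).Normal := by
    rw [sup_comm, ← hker, ← comap_map_eq]
    exact hRn.comap π
  by_cases hUQ : U ⊔ Q = ⊤
  · exact hasNormalSylow_of_isSylowSubgroup ‹_›
      (isSylowSubgroup_of_sup_eq_top hrp hU Q.isPGroup' hUQ) hU₁
  · exact ⟨r, hr, Q, normal_sylow_of_isSupersoluble_sup hrp hpG hU hn (h _ hUQ),
      fun hQ ↦ hR₁ (by rw [hQ, Subgroup.map_bot])⟩

theorem HasNormalSylow.of_normal_index_eq_pow [Finite G] {p k : ℕ} [Fact p.Prime]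
    {N : Subgroup G} [N.Normal] (hNk : N.index = p ^ k)
    (hO : ∀ U : Subgroup G, U.Normal → IsPGroup p U → U = ⊥)
    (hN : HasNormalSylow N) : HasNormalSylow G := by
  obtain ⟨r, hr, R, hRn, hR₁⟩ := hN
  have := R.characteristic_of_normal hRn
  have hRG : ((R : Subgroup N).map N.subtype).Normal := ConjAct.normal_of_characteristic_of_normal
  have hRr := R.isPGroup'.map N.subtype
  have hRG₁ : (R : Subgroup N).map N.subtype ≠ ⊥ :=
    (map_eq_bot_iff_of_injective _ N.subtype_injective).not.2 hR₁
  refine hasNormalSylow_of_isSylowSubgroup hRG ⟨hRr, ?_⟩ hRG₁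
  rw [index_map_subtype, hNk]
  refine hr.1.not_dvd_mul R.not_dvd_index fun hrk ↦ hRG₁ (hO _ hRG ?_)
  rwa [← (Nat.prime_dvd_prime_iff_eq hr.1 Fact.out).1 (hr.1.dvd_of_dvd_pow hrk)]

theorem isSupersoluble_of_ne_top_quotient (h : ∀ H : Subgroup G, H ≠ ⊤ → IsSupersoluble H)
    {U : Subgroup G} [U.Normal] {H : Subgroup (G ⧸ U)} (hH : H ≠ ⊤) : IsSupersoluble H := by
  have hU := QuotientGroup.mk'_surjective U
  refine (h (H.comap (QuotientGroup.mk' U)) fun hc ↦ hH ?_).of_surjective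
    (MonoidHom.subgroupComap_surjective_of_surjective _ H hU)
  rw [← map_comap_eq_self_of_surjective hU H, hc, map_top_of_surjective _ hU]

theorem isSupersoluble_of_ne_top_subgroup (h : ∀ H : Subgroup G, H ≠ ⊤ → IsSupersoluble H)
    {N : Subgroup G} {H : Subgroup N} (hH : H ≠ ⊤) : IsSupersoluble H := by
  let e := H.equivMapOfInjective N.subtype N.subtype_injective
  refine (h (H.map N.subtype) fun hm ↦ hH ?_).of_surjective (f := e.symm.toMonoidHom)
    e.symm.surjective
  rw [← comap_map_eq_self_of_injective N.subtype_injective H, hm, comap_top]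

theorem hasNormalSylow_of_forall_ne_top_isSupersoluble [Finite G] [Nontrivial G]
    (h : ∀ H : Subgroup G, H ≠ ⊤ → IsSupersoluble H) : HasNormalSylow G := by
  induction hn : Nat.card G using Nat.strong_induction_on generalizing G with
  | _ n ih =>
  have hp := Fact.mk (Nat.minFac_prime (Finite.one_lt_card (α := G)).ne')
  have hpG := Nat.minFac_dvd (Nat.card G)
  by_cases hO : ∀ U : Subgroup G, U.Normal → IsPGroup (Nat.card G).minFac U → U = ⊥
  · obtain ⟨N, hNn, hN, k, hNk⟩ :=
      (frobeniusCondition_minFac_card h hO).exists_normal_index_eq_pow hpG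
    obtain rfl | hN₁ := eq_or_ne N ⊥
    · exact hasNormalSylow_of_isPGroup (IsPGroup.of_card (index_bot (G := G) ▸ hNk))
    have : Nontrivial N := (nontrivial_iff_ne_bot N).2 hN₁
    have hlt : Nat.card N < n :=
      hn ▸ N.card_le_card_group.lt_of_ne fun hc ↦ hN (N.eq_top_of_card_eq hc)
    exact .of_normal_index_eq_pow hNk hO
      (ih _ hlt (fun _ ↦ isSupersoluble_of_ne_top_subgroup h) rfl)
  · push Not at hO
    obtain ⟨U, hUn, hU, hU₁⟩ := hO
    obtain rfl | hU₂ := eq_or_ne U ⊤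
    · exact hasNormalSylow_of_isPGroup (hU.of_equiv topEquiv)
    have : Nontrivial (G ⧸ U) := QuotientGroup.nontrivial_iff.2 hU₂
    have hlt : Nat.card (G ⧸ U) < n := by
      rw [← hn, U.card_eq_card_quotient_mul_card_subgroup]
      exact lt_mul_of_one_lt_right Nat.card_pos ((one_lt_card_iff_ne_bot U).2 hU₁)
    exact .of_quotient h (coprime_minFac_sub_one _) hU hU₁
      (ih _ hlt (fun _ ↦ isSupersoluble_of_ne_top_quotient h) rfl)

theorem IsSylowSubgroup.ne_bot {q : ℕ} {H : Subgroup G} (hH : IsSylowSubgroup q H)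
    (hq : q ∣ Nat.card G) : H ≠ ⊥ := by
  rintro rfl
  exact hH.2 (index_bot (G := G) ▸ hq)

end

/-- In a minimal nonsupersoluble group `G`, the supersoluble residual `G^𝔘` is the unique
normal Sylow subgroup of `G`. -/
theorem minimalNonsupersoluble_ssResidual_unique_normal_sylow
    (G : Type*) [Group G] [Finite G] (h : IsMinimalNonsupersoluble G) :
    ∃ p : ℕ, p.Prime ∧ p ∣ Nat.card G ∧ IsSylowSubgroup p (ssResidual G) ∧
      (ssResidual G).Normal ∧
      ∀ (q : ℕ) (H : Subgroup G), q.Prime → q ∣ Nat.card G →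
        IsSylowSubgroup q H → H.Normal → H = ssResidual G := by
  have : Nontrivial G := not_subsingleton_iff_nontrivial.1 fun _ ↦
    h.1 isSupersoluble_of_subsingleton
  obtain ⟨p, hp, P, hPn, hP⟩ := hasNormalSylow_of_forall_ne_top_isSupersoluble h.2
  have hres : ssResidual G = P := ssResidual_eq_of_normal_sylow h P hP
  have hpG : p ∣ Nat.card G :=
    (P.isPGroup'.card_eq_or_dvd.resolve_left (mt card_eq_one.1 hP)).trans (card_subgroup_dvd_card _)
  refine ⟨p, hp.1, hpG, hres ▸ ⟨P.isPGroup', P.not_dvd_index⟩, hres ▸ hPn, ?_⟩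
  intro q H hq hqG hH hHn
  have := Fact.mk hq
  have : (hH.1.toSylow hH.2 : Subgroup G).Normal := hHn
  exact (ssResidual_eq_of_normal_sylow h (hH.1.toSylow hH.2) (hH.ne_bot hqG)).symm
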